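/- The number of bicrucial permutations of length 9 is exactly 54. -/

import Mathlib

/-- The permutation `σ` of length `n` has a square starting at position `k`
with half-length `ℓ`: the factors `(σ k, …, σ (k+ℓ-1))` and
`(σ (k+ℓ), …, σ (k+2ℓ-1))` are order-isomorphic. -/
def HasSquareAt {n : ℕ} (σ : Fin n → Fin n) (k ℓ : ℕ) : Prop :=
  2 ≤ ℓ ∧ ∃ hb : k + 2 * ℓ ≤ n, ∀ (i j : ℕ) (hi : i < ℓ) (hj : j < ℓ),
    (σ ⟨k + i, by omega⟩ < σ ⟨k + j, by omega⟩ ↔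
      σ ⟨k + ℓ + i, by omega⟩ < σ ⟨k + ℓ + j, by omega⟩)

/-- `σ` contains a square. -/
def ContainsSquare {n : ℕ} (σ : Fin n → Fin n) : Prop :=
  ∃ k ℓ : ℕ, HasSquareAt σ k ℓ

/-- `σ` is square-free: it contains no square. -/
def SquareFree {n : ℕ} (σ : Fin n → Fin n) : Prop :=
  ¬ ContainsSquare σ

/-- `π` (of length `n+1`) is a right-extension of `σ` (of length `n`):
the prefix `(π 0, …, π (n-1))` is order-isomorphic to `σ`. -/
def IsRightExtension {n : ℕ} (σ : Fin n → Fin n) (π : Fin (n + 1) → Fin (n + 1)) : Prop :=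
  ∀ i j : Fin n, π i.castSucc < π j.castSucc ↔ σ i < σ j

/-- `π` (of length `n+1`) is a left-extension of `σ` (of length `n`):
the suffix `(π 1, …, π n)` is order-isomorphic to `σ`. -/
def IsLeftExtension {n : ℕ} (σ : Fin n → Fin n) (π : Fin (n + 1) → Fin (n + 1)) : Prop :=
  ∀ i j : Fin n, π i.succ < π j.succ ↔ σ i < σ j

/-- `σ` is right-crucial: square-free, and every right-extension contains a square. -/
def RightCrucial {n : ℕ} (σ : Equiv.Perm (Fin n)) : Prop :=
  SquareFree ⇑σ ∧ ∀ π : Equiv.Perm (Fin (n + 1)), IsRightExtension ⇑σ ⇑π → ContainsSquare ⇑π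

/-- `σ` is left-crucial: square-free, and every left-extension contains a square. -/
def LeftCrucial {n : ℕ} (σ : Equiv.Perm (Fin n)) : Prop :=
  SquareFree ⇑σ ∧ ∀ π : Equiv.Perm (Fin (n + 1)), IsLeftExtension ⇑σ ⇑π → ContainsSquare ⇑π

/-- `σ` is bicrucial: both left-crucial and right-crucial. -/
def Bicrucial {n : ℕ} (σ : Equiv.Perm (Fin n)) : Prop :=
  LeftCrucial σ ∧ RightCrucial σ

/-!
Square-free permutations are grown from the left, one letter at a time: the left-extensions of `σ`
are determined by their first letter, and such an extension of a square-free permutation contains a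
square if and only if it starts with one. A square of odd half-length forces a square of half-length
2, because otherwise its ascents and descents would follow the pattern `UUDDUUDD…`; for extensions
of length at most 11 it is therefore enough to look for initial squares of half-lengths 2 and 4.

Reversal exchanges left- and right-crucial permutations. As the relevant squares of an extension
involve at most seven letters of the original permutation, a square-free permutation of length 8 or
9 is right-crucial if and only if its last seven letters form a right-crucial pattern. Only 60
permutations of length 7 are right-crucial, and the bicrucial permutations of length 9 are found by
growing these twice.
-/

section Squares

variable {n : ℕ} {σ : Fin n → Fin n} {k ℓ : ℕ}

/-- The letter of `σ` in position `i` is followed by a larger one. Positions are natural numbers so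
that they can be added freely; a position without a successor is not an ascent. -/
def IsAscent (σ : Fin n → Fin n) (i : ℕ) : Prop :=
  ∃ hi : i + 1 < n, σ ⟨i, by omega⟩ < σ ⟨i + 1, hi⟩

theorem HasSquareAt.isAscent_iff (h : HasSquareAt σ k ℓ) {i : ℕ} (hi : i + 1 < ℓ) :
    IsAscent σ (k + i) ↔ IsAscent σ (k + ℓ + i) := by
  obtain ⟨_, hb, hsq⟩ := h
  simpa only [IsAscent, add_assoc, exists_prop_of_true (show k + (i + 1) < n by omega),
    exists_prop_of_true (show k + (ℓ + (i + 1)) < n by omega)] using hsq i (i + 1) (by omega) hi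

theorem isAscent_add_two_iff (hσ : Function.Injective σ) (hk : k + 4 ≤ n)
    (h : ¬HasSquareAt σ k 2) : IsAscent σ (k + 2) ↔ ¬IsAscent σ k := by
  have hne : ∀ i (hi : i + 1 < n), σ ⟨i, by omega⟩ ≠ σ ⟨i + 1, hi⟩ := fun i hi =>
    hσ.ne (by simp)
  contrapose! h
  refine ⟨le_rfl, by omega, fun i j hi hj => ?_⟩
  have h01 := hne k (by omega)
  have h23 := hne (k + 2) (by omega)
  simp only [IsAscent, exists_prop_of_true (show k + 1 < n by omega),
    exists_prop_of_true (show k + 2 + 1 < n by omega)] at h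
  interval_cases i <;> interval_cases j <;> grind

/-- Without squares of half-length 2 the ascents and descents follow the pattern `UUDDUUDD…`, which
a shift by an odd distance does not preserve. -/
theorem HasSquareAt.exists_two_of_odd (hσ : Function.Injective σ) (h : HasSquareAt σ k ℓ)
    (hℓ : Odd ℓ) : ∃ j, HasSquareAt σ j 2 := by
  by_contra! hno
  obtain ⟨m, rfl⟩ := hℓ
  have hm : 1 ≤ m := by have := h.1; omega
  have hb : k + 2 * (2 * m + 1) ≤ n := h.2.1
  have period : ∀ i r, i + 2 * r + 2 ≤ n →
      (IsAscent σ (i + 2 * r) ↔ (IsAscent σ i ↔ Even r)) := by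
    intro i r hr
    induction r with
    | zero => simp
    | succ r ih =>
      have flip := isAscent_add_two_iff (k := i + 2 * r) hσ (by omega) (hno _)
      rw [mul_add_one, ← add_assoc, flip, ih (by omega), Nat.even_add_one]
      tauto
  have shift_zero := h.isAscent_iff (i := 0) (by omega)
  have shift_one := h.isAscent_iff (i := 1) (by omega)
  have period_zero := period k (m + 1) (by omega)
  have period_one := period (k + 1) m (by omega)
  rw [Nat.even_add_one] at period_zero
  rw [show k + (2 * m + 1) + 0 = k + 1 + 2 * m by ring, add_zero] at shift_zero
  rw [show k + (2 * m + 1) + 1 = k + 2 * (m + 1) by ring] at shift_one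
  tauto

end Squares

section LeftExtensions

variable {n : ℕ} {σ : Fin n → Fin n} {π : Fin (n + 1) → Fin (n + 1)}

theorem IsLeftExtension.hasSquareAt_succ_iff (h : IsLeftExtension σ π) {k ℓ : ℕ} :
    HasSquareAt π (k + 1) ℓ ↔ HasSquareAt σ k ℓ := by
  simp only [HasSquareAt, add_right_comm _ 1, add_le_add_iff_right]
  exact and_congr_right fun _ => exists_congr fun hb => forall₄_congr fun i j hi hj =>
    iff_congr (h ⟨k + i, by omega⟩ ⟨k + j, by omega⟩)
      (h ⟨k + ℓ + i, by omega⟩ ⟨k + ℓ + j, by omega⟩)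

theorem IsLeftExtension.containsSquare_iff (h : IsLeftExtension σ π) :
    ContainsSquare π ↔ ContainsSquare σ ∨ ∃ ℓ, HasSquareAt π 0 ℓ := by
  constructor
  · rintro ⟨_ | k, ℓ, hsq⟩
    · exact .inr ⟨ℓ, hsq⟩
    · exact .inl ⟨k, ℓ, h.hasSquareAt_succ_iff.1 hsq⟩
  · rintro (⟨k, ℓ, hsq⟩ | ⟨ℓ, hsq⟩)
    · exact ⟨k + 1, ℓ, h.hasSquareAt_succ_iff.2 hsq⟩
    · exact ⟨0, ℓ, hsq⟩

theorem IsLeftExtension.containsSquare_iff_two_or_four (h : IsLeftExtension σ π)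
    (hπ : Function.Injective π) (hσ : SquareFree σ) (hn : n ≤ 10) :
    ContainsSquare π ↔ HasSquareAt π 0 2 ∨ HasSquareAt π 0 4 := by
  refine ⟨fun hsq => ?_, by rintro (hsq | hsq) <;> exact ⟨0, _, hsq⟩⟩
  obtain ⟨ℓ, hℓ⟩ := (h.containsSquare_iff.1 hsq).resolve_left hσ
  rcases Nat.even_or_odd ℓ with heven | hodd
  · obtain ⟨r, rfl⟩ := heven
    have hr : r = 1 ∨ r = 2 := by have := hℓ.1; have : 0 + 2 * (r + r) ≤ n + 1 := hℓ.2.1; omega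
    rcases hr with rfl | rfl
    · exact .inl hℓ
    · exact .inr hℓ
  · obtain ⟨_ | j, hj⟩ := hℓ.exists_two_of_odd hπ hodd
    · exact .inl hj
    · exact absurd ⟨j, 2, h.hasSquareAt_succ_iff.1 hj⟩ hσ

end LeftExtensions

section Reversal

variable {n : ℕ}

theorem HasSquareAt.of_comp_rev {σ : Fin n → Fin n} {k ℓ : ℕ}
    (h : HasSquareAt (σ ∘ Fin.rev) k ℓ) : HasSquareAt σ (n - (k + 2 * ℓ)) ℓ := by
  obtain ⟨hℓ, hb, hsq⟩ := h
  refine ⟨hℓ, by omega, fun i j hi hj => ?_⟩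
  have := hsq (ℓ - 1 - i) (ℓ - 1 - j) (by omega) (by omega)
  simp only [Function.comp_apply, Fin.rev] at this
  convert this.symm using 4 <;> omega

theorem containsSquare_comp_rev_iff {σ : Fin n → Fin n} :
    ContainsSquare (σ ∘ Fin.rev) ↔ ContainsSquare σ := by
  have of_comp_rev : ∀ τ : Fin n → Fin n, ContainsSquare (τ ∘ Fin.rev) → ContainsSquare τ :=
    fun _ ⟨_, ℓ, h⟩ => ⟨_, ℓ, h.of_comp_rev⟩
  refine ⟨of_comp_rev σ, fun h => of_comp_rev _ ?_⟩
  rwa [Function.comp_assoc, Fin.rev_involutive.comp_self]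

theorem isLeftExtension_comp_rev_iff {σ : Fin n → Fin n} {π : Fin (n + 1) → Fin (n + 1)} :
    IsLeftExtension (σ ∘ Fin.rev) (π ∘ Fin.rev) ↔ IsRightExtension σ π := by
  simp only [IsLeftExtension, IsRightExtension, Function.comp_apply, Fin.rev_succ]
  rw [← Fin.revPerm.forall_congr_right]
  refine forall_congr' fun i => ?_
  rw [← Fin.revPerm.forall_congr_right]
  simp

theorem rightCrucial_iff_leftCrucial_revPerm_trans (σ : Equiv.Perm (Fin n)) :
    RightCrucial σ ↔ LeftCrucial (Fin.revPerm.trans σ) := by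
  refine and_congr (not_congr containsSquare_comp_rev_iff.symm) ?_
  rw [← (Equiv.mulRight (Fin.revPerm : Equiv.Perm (Fin (n + 1)))).forall_congr_right
    (q := fun π : Equiv.Perm (Fin (n + 1)) =>
      IsLeftExtension (Fin.revPerm.trans σ) ⇑π → ContainsSquare ⇑π)]
  exact forall_congr' fun π =>
    imp_congr isLeftExtension_comp_rev_iff.symm containsSquare_comp_rev_iff.symm

end Reversal

section PrependPerm

variable {n : ℕ}

/-- The left-extension of a permutation `σ` with first letter `a`; the other letters are those of
`σ`, raised by one where necessary to make room for `a`. -/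
def prependPerm (a : Fin (n + 1)) (σ : Equiv.Perm (Fin n)) : Equiv.Perm (Fin (n + 1)) :=
  (finSuccEquiv n).trans ((Equiv.optionCongr σ).trans (finSuccEquiv' a).symm)

@[simp]
theorem prependPerm_zero (a : Fin (n + 1)) (σ : Equiv.Perm (Fin n)) : prependPerm a σ 0 = a := by
  simp [prependPerm]

@[simp]
theorem prependPerm_succ (a : Fin (n + 1)) (σ : Equiv.Perm (Fin n)) (i : Fin n) :
    prependPerm a σ i.succ = a.succAbove (σ i) := by
  simp [prependPerm]

theorem isLeftExtension_prependPerm (a : Fin (n + 1)) (σ : Equiv.Perm (Fin n)) :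
    IsLeftExtension σ (prependPerm a σ) := fun i j => by
  simp only [prependPerm_succ, (Fin.strictMono_succAbove a).lt_iff_lt]

theorem prependPerm_bijective :
    Function.Bijective fun p : Fin (n + 1) × Equiv.Perm (Fin n) => prependPerm p.1 p.2 := by
  rw [Fintype.bijective_iff_injective_and_card]
  refine ⟨fun ⟨a, σ⟩ ⟨b, τ⟩ h => ?_, by simp [Fintype.card_perm, Nat.factorial_succ]⟩
  obtain rfl : a = b := by simpa using DFunLike.congr_fun h 0
  obtain rfl : σ = τ := Equiv.ext fun i => by simpa using DFunLike.congr_fun h i.succ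
  rfl

theorem perm_eq_of_lt_iff_lt {σ τ : Equiv.Perm (Fin n)} (h : ∀ i j, σ i < σ j ↔ τ i < τ j) :
    σ = τ := by
  have hmono : StrictMono (σ.symm.trans τ) := fun x y hxy => by
    simpa [← h] using hxy
  have hid : hmono.orderIsoOfSurjective _ (Equiv.surjective _) = OrderIso.refl _ :=
    Subsingleton.elim _ _
  ext i
  simpa using congrArg Fin.val (DFunLike.congr_fun hid (σ i)).symm

theorem isLeftExtension_iff_exists_eq_prependPerm {σ : Equiv.Perm (Fin n)}
    {π : Equiv.Perm (Fin (n + 1))} : IsLeftExtension σ π ↔ ∃ a, π = prependPerm a σ := by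
  refine ⟨fun h => ?_, by rintro ⟨a, rfl⟩; exact isLeftExtension_prependPerm a σ⟩
  obtain ⟨⟨a, τ⟩, rfl⟩ := prependPerm_bijective.surjective π
  refine ⟨a, ?_⟩
  rw [perm_eq_of_lt_iff_lt fun i j => (isLeftExtension_prependPerm a τ i j).symm.trans (h i j)]

theorem leftCrucial_iff_forall_prependPerm {σ : Equiv.Perm (Fin n)} :
    LeftCrucial σ ↔ SquareFree σ ∧ ∀ a, ContainsSquare (prependPerm a σ) := by
  simp only [LeftCrucial, isLeftExtension_iff_exists_eq_prependPerm, forall_exists_index,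
    forall_comm (β := Fin (n + 1)), forall_eq]

theorem squareFree_prependPerm_iff (hn : n ≤ 10) {a : Fin (n + 1)} {σ : Equiv.Perm (Fin n)} :
    SquareFree (prependPerm a σ) ↔
      SquareFree σ ∧ ¬(HasSquareAt (prependPerm a σ) 0 2 ∨ HasSquareAt (prependPerm a σ) 0 4) := by
  have h := isLeftExtension_prependPerm a σ
  by_cases hσ : SquareFree σ
  · rw [SquareFree, h.containsSquare_iff_two_or_four (Equiv.injective _) hσ hn]
    tauto
  · have : ContainsSquare σ := not_not.1 hσ
    simp [SquareFree, h.containsSquare_iff, this]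

end PrependPerm

section Words

/-- A word `l`, thought of as the sequence of letters of a permutation, starts with two
order-isomorphic factors of length `ℓ`. -/
def StartsWithSquare (l : List ℕ) (ℓ : ℕ) : Prop :=
  2 * ℓ ≤ l.length ∧ ∀ p ∈ (l.take ℓ).zip (l.drop ℓ), ∀ q ∈ (l.take ℓ).zip (l.drop ℓ),
    (p.1 < q.1 ↔ p.2 < q.2)

instance (l : List ℕ) : DecidablePred (StartsWithSquare l) := fun ℓ => by
  unfold StartsWithSquare; infer_instance

theorem startsWithSquare_iff_getElem {l : List ℕ} {ℓ : ℕ} :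
    StartsWithSquare l ℓ ↔ ∃ hl : 2 * ℓ ≤ l.length, ∀ (i j : ℕ) (hi : i < ℓ) (hj : j < ℓ),
      (l[i] < l[j] ↔ l[ℓ + i] < l[ℓ + j]) := by
  rw [StartsWithSquare, ← exists_prop]
  refine exists_congr fun hl => ?_
  have hlen : ((l.take ℓ).zip (l.drop ℓ)).length = ℓ := by simp; omega
  simp only [List.forall_mem_iff_forall_getElem, hlen, List.getElem_zip, List.getElem_take,
    List.getElem_drop]
  exact ⟨fun h i j hi hj => h i hi j hj, fun h i hi j hj => h i j hi hj⟩

theorem startsWithSquare_map_iff {f : ℕ → ℕ} (hf : StrictMono f) {l : List ℕ} {ℓ : ℕ} :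
    StartsWithSquare (l.map f) ℓ ↔ StartsWithSquare l ℓ := by
  simp only [startsWithSquare_iff_getElem, List.length_map, List.getElem_map, hf.lt_iff_lt]

theorem startsWithSquare_append_iff {l : List ℕ} {ℓ : ℕ} (hl : 2 * ℓ ≤ l.length) (m : List ℕ) :
    StartsWithSquare (l ++ m) ℓ ↔ StartsWithSquare l ℓ := by
  simp only [startsWithSquare_iff_getElem, exists_prop_of_true hl,
    exists_prop_of_true (show 2 * ℓ ≤ (l ++ m).length by simp; omega)]
  refine forall₄_congr fun i j hi hj => ?_
  rw [List.getElem_append_left, List.getElem_append_left, List.getElem_append_left,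
    List.getElem_append_left]

/-- The word starts with a square of half-length 2 or 4. By
`IsLeftExtension.containsSquare_iff_two_or_four`, these are the only squares that a left-extension
of a square-free permutation of length at most 10 needs to be checked for. -/
def StartsWithShortSquare (l : List ℕ) : Prop :=
  StartsWithSquare l 2 ∨ StartsWithSquare l 4

instance : DecidablePred StartsWithShortSquare := fun l => by
  unfold StartsWithShortSquare; infer_instance

/-- The increasing enumeration of the natural numbers other than `a`. -/
def bump (a x : ℕ) : ℕ :=
  if x < a then x else x + 1

theorem bump_strictMono (a : ℕ) : StrictMono (bump a) := fun x y h => by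
  grind [bump]

/-- The word of the left-extension with first letter `a`, see `word_prependPerm`. -/
def prependWord (a : ℕ) (l : List ℕ) : List ℕ :=
  a :: l.map (bump a)

@[simp]
theorem length_prependWord (a : ℕ) (l : List ℕ) : (prependWord a l).length = l.length + 1 := by
  simp [prependWord]

theorem prependWord_inj {a b : ℕ} {l m : List ℕ} :
    prependWord a l = prependWord b m ↔ a = b ∧ l = m := by
  simp only [prependWord, List.cons.injEq, and_congr_right_iff]
  rintro rfl
  exact (List.map_injective_iff.2 (bump_strictMono a).injective).eq_iff

/-- Every left-extension of `l` by a letter from `0, …, l.length` starts with a short square. -/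
def IsLeftBlocked (l : List ℕ) : Prop :=
  ∀ a < l.length + 1, StartsWithShortSquare (prependWord a l)

instance : DecidablePred IsLeftBlocked := fun l => by
  unfold IsLeftBlocked; infer_instance

theorem prependWord_succ_map_bump {a b : ℕ} (h : a ≤ b) (l : List ℕ) :
    prependWord (b + 1) (l.map (bump a)) = (prependWord b l).map (bump a) := by
  simp only [prependWord, List.map_cons, List.map_map, List.cons.injEq, List.map_inj_left]
  grind [bump]

theorem prependWord_map_bump {a b : ℕ} (h : b ≤ a) (l : List ℕ) :
    prependWord b (l.map (bump a)) = (prependWord b l).map (bump (a + 1)) := by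
  simp only [prependWord, List.map_cons, List.map_map, List.cons.injEq, List.map_inj_left]
  grind [bump]

theorem startsWithShortSquare_map_bump_iff {a : ℕ} {l : List ℕ} :
    StartsWithShortSquare (l.map (bump a)) ↔ StartsWithShortSquare l :=
  or_congr (startsWithSquare_map_iff (bump_strictMono a))
    (startsWithSquare_map_iff (bump_strictMono a))

theorem startsWithShortSquare_append_iff {l : List ℕ} (hl : 8 ≤ l.length) (m : List ℕ) :
    StartsWithShortSquare (l ++ m) ↔ StartsWithShortSquare l :=
  or_congr (startsWithSquare_append_iff (by omega) m) (startsWithSquare_append_iff hl m)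

/-- A short square at the start of a left-extension involves at most seven letters of the original
word, so letters appended behind these have no influence. -/
theorem isLeftBlocked_map_bump_append_iff {a : ℕ} {l : List ℕ} (hl : 7 ≤ l.length)
    (ha : a ≤ l.length) : IsLeftBlocked (l.map (bump a) ++ [a]) ↔ IsLeftBlocked l := by
  have drop_last (b : ℕ) : StartsWithShortSquare (prependWord b (l.map (bump a) ++ [a])) ↔
      StartsWithShortSquare (prependWord b (l.map (bump a))) := by
    have hlen : 8 ≤ (prependWord b (l.map (bump a))).length := by simpa using hl
    rw [← startsWithShortSquare_append_iff hlen [bump b a]]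
    simp [prependWord]
  have skip_low {b : ℕ} (hb : b ≤ a) : StartsWithShortSquare (prependWord b (l.map (bump a))) ↔
      StartsWithShortSquare (prependWord b l) := by
    rw [prependWord_map_bump hb, startsWithShortSquare_map_bump_iff]
  have skip_high {b : ℕ} (hb : a ≤ b) :
      StartsWithShortSquare (prependWord (b + 1) (l.map (bump a))) ↔
        StartsWithShortSquare (prependWord b l) := by
    rw [prependWord_succ_map_bump hb, startsWithShortSquare_map_bump_iff]
  simp only [IsLeftBlocked, drop_last, List.length_append, List.length_map, List.length_singleton]
  constructor
  · intro h b hb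
    rcases le_total b a with hba | hab
    · exact (skip_low hba).1 (h b (by omega))
    · exact (skip_high hab).1 (h (b + 1) (by omega))
  · rintro h (_ | b) hb
    · exact (skip_low a.zero_le).2 (h 0 (by omega))
    · rcases le_or_gt a b with hab | hba
      · exact (skip_high hab).2 (h b (by omega))
      · exact (skip_low hba).2 (h (b + 1) (by omega))

end Words

section Enumeration

/-- The left-extensions of `l` that do not start with a short square. -/
def squareFreeExtensions (l : List ℕ) : List (List ℕ) :=
  ((List.range (l.length + 1)).map (prependWord · l)).filter (¬StartsWithShortSquare ·)

theorem mem_squareFreeExtensions {l m : List ℕ} : m ∈ squareFreeExtensions l ↔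
    ∃ a ≤ l.length, ¬StartsWithShortSquare (prependWord a l) ∧ prependWord a l = m := by
  simp only [squareFreeExtensions, List.mem_filter, List.mem_map, List.mem_range,
    Nat.lt_succ_iff, decide_eq_true_iff]
  grind

/-- The words of the square-free permutations of length `n`, provided that `n ≤ 11`; see
`mem_squareFreeWords`. -/
def squareFreeWords : ℕ → List (List ℕ)
  | 0 => [[]]
  | n + 1 => (squareFreeWords n).flatMap squareFreeExtensions

theorem length_of_mem_squareFreeWords {n : ℕ} {l : List ℕ} (hl : l ∈ squareFreeWords n) :
    l.length = n := by
  induction n generalizing l with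
  | zero => simpa [squareFreeWords] using hl
  | succ n ih =>
    obtain ⟨m, hm, hlm⟩ := List.mem_flatMap.1 hl
    obtain ⟨a, -, -, rfl⟩ := mem_squareFreeExtensions.1 hlm
    rw [length_prependWord, ih hm]

theorem nodup_squareFreeWords (n : ℕ) : (squareFreeWords n).Nodup := by
  induction n with
  | zero => simp [squareFreeWords]
  | succ n ih =>
    refine List.nodup_flatMap.2 ⟨fun l _ => ?_, ih.imp fun {l m} hlm => ?_⟩
    · exact (List.nodup_range.map fun a b h => (prependWord_inj.1 h).1).filter _
    · intro w hl hm
      obtain ⟨a, -, -, rfl⟩ := mem_squareFreeExtensions.1 hl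
      obtain ⟨b, -, -, h⟩ := mem_squareFreeExtensions.1 hm
      exact hlm (prependWord_inj.1 h).2.symm

/-- The words of the right-crucial permutations of length `n`, provided that `n ≤ 10`. -/
def rightCrucialWords (n : ℕ) : List (List ℕ) :=
  (squareFreeWords n).filter fun l => IsLeftBlocked l.reverse

theorem isLeftBlocked_reverse_iff {l m : List ℕ} (hl : 7 ≤ l.length)
    (hm : m ∈ squareFreeExtensions l) : IsLeftBlocked m.reverse ↔ IsLeftBlocked l.reverse := by
  obtain ⟨a, ha, -, rfl⟩ := mem_squareFreeExtensions.1 hm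
  rw [prependWord, List.reverse_cons, ← List.map_reverse]
  exact isLeftBlocked_map_bump_append_iff (by simpa) (by simpa)

theorem filter_flatMap_eq_flatMap_filter {α β : Type*} {f : α → List β} {p : α → Bool}
    {q : β → Bool} {l : List α} (h : ∀ a ∈ l, ∀ b ∈ f a, q b = p a) :
    (l.flatMap f).filter q = (l.filter p).flatMap f := by
  induction l with
  | nil => rfl
  | cons a l ih =>
    obtain ⟨ha, hl⟩ := List.forall_mem_cons.1 h
    rw [List.flatMap_cons, List.filter_append, List.filter_congr ha, ih hl, List.filter_cons]
    cases p a <;> simp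

theorem rightCrucialWords_succ {n : ℕ} (hn : 7 ≤ n) :
    rightCrucialWords (n + 1) = (rightCrucialWords n).flatMap squareFreeExtensions := by
  refine filter_flatMap_eq_flatMap_filter fun l hl m hm => decide_eq_decide.2 ?_
  exact isLeftBlocked_reverse_iff (by rwa [length_of_mem_squareFreeWords hl]) hm

end Enumeration

section Correspondence

variable {n : ℕ}

/-- The one-line notation of a permutation. -/
def word (σ : Fin n → Fin n) : List ℕ :=
  List.ofFn fun i => (σ i : ℕ)

@[simp]
theorem length_word (σ : Fin n → Fin n) : (word σ).length = n := by
  simp [word]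

theorem word_injective : Function.Injective (word (n := n)) := fun _ _ h =>
  funext fun i => Fin.ext (congrFun (List.ofFn_injective h) i)

theorem word_comp_rev (σ : Fin n → Fin n) : word (σ ∘ Fin.rev) = (word σ).reverse := by
  refine List.ext_getElem (by simp) fun i hi hi' => ?_
  simp only [word, List.getElem_ofFn, List.getElem_reverse, List.length_ofFn, Function.comp_apply]
  congr 2
  grind

theorem word_prependPerm (a : Fin (n + 1)) (σ : Equiv.Perm (Fin n)) :
    word (prependPerm a σ) = prependWord a (word σ) := by
  simp only [word, prependWord, List.ofFn_succ, prependPerm_zero, prependPerm_succ,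
    List.map_ofFn, List.cons.injEq, true_and]
  congr 1
  funext i
  simp only [Fin.succAbove, Function.comp_apply, bump, Fin.lt_def, Fin.val_castSucc]
  split_ifs <;> rfl

theorem hasSquareAt_zero_iff {σ : Fin n → Fin n} {ℓ : ℕ} (hℓ : 2 ≤ ℓ) :
    HasSquareAt σ 0 ℓ ↔ StartsWithSquare (word σ) ℓ := by
  simp [HasSquareAt, startsWithSquare_iff_getElem, word, hℓ]

theorem startsWithShortSquare_word_iff {σ : Fin n → Fin n} :
    StartsWithShortSquare (word σ) ↔ HasSquareAt σ 0 2 ∨ HasSquareAt σ 0 4 :=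
  or_congr (hasSquareAt_zero_iff le_rfl).symm (hasSquareAt_zero_iff (by norm_num)).symm

theorem SquareFree.leftCrucial_iff {σ : Equiv.Perm (Fin n)} (hσ : SquareFree σ) (hn : n ≤ 10) :
    LeftCrucial σ ↔ IsLeftBlocked (word σ) := by
  have blocked (a : Fin (n + 1)) : ContainsSquare (prependPerm a σ) ↔
      StartsWithShortSquare (prependWord a (word σ)) := by
    rw [(isLeftExtension_prependPerm a σ).containsSquare_iff_two_or_four (Equiv.injective _) hσ hn,
      ← word_prependPerm, startsWithShortSquare_word_iff]
  simp only [leftCrucial_iff_forall_prependPerm, hσ, true_and, blocked, IsLeftBlocked, length_word,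
    Fin.forall_iff]

theorem SquareFree.rightCrucial_iff {σ : Equiv.Perm (Fin n)} (hσ : SquareFree σ) (hn : n ≤ 10) :
    RightCrucial σ ↔ IsLeftBlocked (word σ).reverse := by
  have hrev : SquareFree (Fin.revPerm.trans σ) := mt containsSquare_comp_rev_iff.1 hσ
  rw [rightCrucial_iff_leftCrucial_revPerm_trans, hrev.leftCrucial_iff hn, ← word_comp_rev]
  rfl

theorem mem_squareFreeWords (hn : n ≤ 11) {l : List ℕ} :
    l ∈ squareFreeWords n ↔ ∃ σ : Equiv.Perm (Fin n), SquareFree σ ∧ word σ = l := by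
  induction n generalizing l with
  | zero =>
    have squareFree (σ : Fin 0 → Fin 0) : SquareFree σ := by
      rintro ⟨k, ℓ, hℓ, hb, -⟩
      omega
    simp [squareFreeWords, word, Unique.exists_iff, squareFree, eq_comm]
  | succ n ih =>
    simp only [squareFreeWords, List.mem_flatMap, ih (by omega), mem_squareFreeExtensions,
      prependPerm_bijective.surjective.exists, Prod.exists, word_prependPerm,
      squareFree_prependPerm_iff (Nat.le_of_succ_le_succ hn), ← startsWithShortSquare_word_iff,
      Fin.exists_iff, Nat.lt_succ_iff]
    constructor
    · rintro ⟨_, ⟨σ, hσ, rfl⟩, a, ha, hblock, rfl⟩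
      exact ⟨a, by simpa using ha, σ, ⟨hσ, hblock⟩, rfl⟩
    · rintro ⟨a, ha, σ, ⟨hσ, hblock⟩, rfl⟩
      exact ⟨word σ, ⟨σ, hσ, rfl⟩, a, by simpa using ha, hblock, rfl⟩

theorem image_word_setOf_bicrucial (hn : n ≤ 10) :
    word ∘ DFunLike.coe '' {σ : Equiv.Perm (Fin n) | Bicrucial σ} =
      {l | l ∈ (rightCrucialWords n).filter IsLeftBlocked} := by
  ext l
  simp only [Set.mem_image, Set.mem_ofPred_eq, Function.comp_apply, rightCrucialWords,
    List.mem_filter, decide_eq_true_iff, mem_squareFreeWords (hn.trans (Nat.le_succ 10))]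
  constructor
  · rintro ⟨σ, ⟨hleft, hright⟩, rfl⟩
    have hσ : SquareFree σ := hleft.1
    exact ⟨⟨⟨σ, hσ, rfl⟩, (hσ.rightCrucial_iff hn).1 hright⟩, (hσ.leftCrucial_iff hn).1 hleft⟩
  · rintro ⟨⟨⟨σ, hσ, rfl⟩, hright⟩, hleft⟩
    exact ⟨σ, ⟨(hσ.leftCrucial_iff hn).2 hleft, (hσ.rightCrucial_iff hn).2 hright⟩, rfl⟩

theorem card_bicrucial (hn : n ≤ 10) : Nat.card {σ : Equiv.Perm (Fin n) // Bicrucial σ} =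
    ((rightCrucialWords n).filter IsLeftBlocked).length := by
  have hnodup : ((rightCrucialWords n).filter IsLeftBlocked).Nodup :=
    ((nodup_squareFreeWords n).filter _).filter _
  have hinj : Function.Injective (word ∘ (DFunLike.coe : Equiv.Perm (Fin n) → Fin n → Fin n)) :=
    word_injective.comp DFunLike.coe_injective
  calc Nat.card {σ : Equiv.Perm (Fin n) // Bicrucial σ}
      = (word ∘ DFunLike.coe '' {σ : Equiv.Perm (Fin n) | Bicrucial σ}).ncard :=
        (Set.ncard_image_of_injective _ hinj).symm
    _ = ((rightCrucialWords n).filter IsLeftBlocked).toFinset.card := by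
        rw [image_word_setOf_bicrucial hn, ← List.coe_toFinset, Set.ncard_coe_finset]
    _ = ((rightCrucialWords n).filter IsLeftBlocked).length :=
        List.toFinset_card_of_nodup hnodup

end Correspondence

/-- The number of bicrucial permutations of length 9 is exactly 54. -/
theorem card_bicrucial_9 :
    Nat.card {σ : Equiv.Perm (Fin 9) // Bicrucial σ} = 54 := by
  rw [card_bicrucial (by norm_num), rightCrucialWords_succ (by norm_num),
    rightCrucialWords_succ (by norm_num)]
  decide +kernel
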